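/- Let e1,…,e6 be linearly independent vectors in ℝ^6 whose Gram matrix (⟪e_i,e_j⟫) equals 2·G, where G is the matrix with rows (2,−1,0,0,0,0), (−1,2,−1,0,0,0), (0,−1,2,−1,0,−1), (0,0,−1,2,−1,0), (0,0,0,−1,2,0), (0,0,−1,0,0,2), and let Λ6 be the ℤ-span of e1,…,e6. Then every integral lattice L in ℝ^6 with Λ6 ⊆ L is isometric (via a linear isometry of ℝ^6) to one of the six lattices: Λ6; ⟨Λ6, e1/2⟩; ⟨Λ6, (e1+e3)/2⟩; ⟨Λ6, e1/2, e3/2⟩; ⟨Λ6, (e1+e3)/2, (e1+e5)/2⟩; and ⟨Λ6, e1/2, e3/2, e5/2⟩. -/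

import Mathlib

noncomputable section

open scoped RealInnerProductSpace

/-- `ℝ^n` with the standard inner product. -/
abbrev E (n : ℕ) := EuclideanSpace ℝ (Fin n)

/-- The standard basis vector `ε i`. -/
def εv {n : ℕ} (i : Fin n) : E n := EuclideanSpace.single i 1

/-- The vector of `ℝ^n` with the given coordinates. -/
def vec {n : ℕ} (x : Fin n → ℝ) : E n := (WithLp.equiv 2 (Fin n → ℝ)).symm x

/-- The vector of `ℝ^n` with the given integer coordinates. -/
def intVec {n : ℕ} (x : Fin n → ℤ) : E n := (WithLp.equiv 2 (Fin n → ℝ)).symm fun i => (x i : ℝ)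

/-- A lattice is integral if all pairwise inner products of its elements are integers. -/
def LatticeIsIntegral {n : ℕ} (L : Submodule ℤ (E n)) : Prop :=
  ∀ x ∈ L, ∀ y ∈ L, ∃ k : ℤ, ⟪x, y⟫ = (k : ℝ)

/-- Two lattices are isometric if a linear isometry of the ambient space carries
one onto the other. -/
def IsometricLattices {n : ℕ} (L M : Submodule ℤ (E n)) : Prop :=
  ∃ g : E n ≃ₗᵢ[ℝ] E n, g '' (L : Set (E n)) = (M : Set (E n))

/-- The Gram matrix of `Λ₆` (up to the factor 2). -/
def G6 : Matrix (Fin 6) (Fin 6) ℝ :=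
  !![2, -1, 0, 0, 0, 0;
     -1, 2, -1, 0, 0, 0;
     0, -1, 2, -1, 0, -1;
     0, 0, -1, 2, -1, 0;
     0, 0, 0, -1, 2, 0;
     0, 0, -1, 0, 0, 2]

/-! The form `c ↦ ‖½ ∑ cᵢ eᵢ‖²` is the quadratic form `Q` of the root lattice `E₆`. The discriminant
group of `Λ₆ ≅ √2 E₆` has no isotropic element of order `3`, so an integral lattice `L ⊇ Λ₆` lies in
`½ Λ₆` and is determined by the binary code `C = L / Λ₆ ⊆ ½ Λ₆ / Λ₆ = 𝔽₂⁶`; integrality of `L` means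
that `C` is totally isotropic for the polar form of `Q` modulo `2`.

On such a `C` the form `Q` is additive, so `C` is spanned by its vectors with `Q = 1` or consists of
vectors with `Q = 0`. A vector over `𝔽₂` with `Q = 1` lifts to a root, and the reflection in that
root acts both on `L` and on `C`. As in Witt's theorem, such reflections move `C` to the span of an
initial segment of either `e₀, e₂, e₄` or `e₀ + e₂, e₀ + e₄`. -/

section RootReflections

open QuadraticMap Submodule

variable {R M : Type*} [CommRing R] [AddCommGroup M] [Module R M] {Q : QuadraticForm R M}

/-- The map `x ↦ x - polar Q v x • v`; it is the reflection in `v` when `Q v = 1`, and a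
transvection when moreover `2 = 0` in `R`. -/
def rootReflection (Q : QuadraticForm R M) (v : M) : Module.End R M :=
  Module.preReflection v (polarBilin Q v)

lemma rootReflection_apply (v x : M) : rootReflection Q v x = x - polar Q v x • v := by
  simp [rootReflection, Module.preReflection_apply]

lemma involutive_rootReflection {v : M} (hv : Q v = 1) :
    Function.Involutive (rootReflection Q v) :=
  Module.involutive_preReflection (by simp [hv])

lemma map_rootReflection {v : M} (hv : Q v = 1) (x : M) : Q (rootReflection Q v x) = Q x := by
  rw [rootReflection_apply, sub_eq_add_neg, ← neg_smul, QuadraticMap.map_add Q, Q.map_smul,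
    polar_smul_right, polar_comm Q x v, hv]
  simp only [smul_eq_mul]
  ring

lemma rootReflection_sub_apply {x y : M} (hQ : Q x = Q y) (hxy : Q (x - y) = 1) :
    rootReflection Q (x - y) x = y := by
  have hpolar : polar Q (x - y) x = Q (x - y) := by
    rw [sub_eq_add_neg x y, QuadraticMap.map_add Q, polar_add_left, polar_self, polar_neg_left,
      polar_neg_right, polar_comm Q y x, Q.map_neg, hQ, two_nsmul]
  rw [rootReflection_apply, hpolar, hxy, one_smul, sub_sub_cancel]

/-- The monoid (in fact a group) generated by the reflections in the vectors with `Q v = 1`: the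
Weyl group of a root lattice, or its reduction modulo a prime. -/
def rootReflectionMonoid (Q : QuadraticForm R M) : Submonoid (Module.End R M) :=
  Submonoid.closure (rootReflection Q '' {v | Q v = 1})

lemma map_of_mem_rootReflectionMonoid {g : Module.End R M} (hg : g ∈ rootReflectionMonoid Q)
    (x : M) : Q (g x) = Q x := by
  induction hg using Submonoid.closure_induction generalizing x with
  | mem g hg =>
    obtain ⟨v, hv, rfl⟩ := hg
    exact map_rootReflection hv x
  | one => rfl
  | mul g h _ _ ihg ihh => rw [Module.End.mul_apply, ihg, ihh]

lemma polar_of_mem_rootReflectionMonoid {g : Module.End R M}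
    (hg : g ∈ rootReflectionMonoid Q) (x y : M) : polar Q (g x) (g y) = polar Q x y := by
  simp only [polar, ← map_add, map_of_mem_rootReflectionMonoid hg]

lemma exists_mem_rootReflectionMonoid_apply_eq {x y : M} (hQ : Q x = Q y)
    (hxy : x = y ∨ Q (x - y) = 1) :
    ∃ g ∈ rootReflectionMonoid Q, g x = y ∧ ∀ w, polar Q w x = polar Q w y → g w = w := by
  obtain rfl | hxy := hxy
  · exact ⟨1, one_mem _, rfl, fun _ _ => rfl⟩
  · refine ⟨rootReflection Q (x - y), Submonoid.subset_closure ⟨_, hxy, rfl⟩,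
      rootReflection_sub_apply hQ hxy, fun w hw => ?_⟩
    rw [rootReflection_apply, polar_comm, polar_sub_right, hw, sub_self, zero_smul, sub_zero]

/-- A sequence of vectors with `Q = c` which can be used to normalise subspaces that are isotropic
for `polar Q` and spanned by vectors with `Q = c`: modulo reflections fixing `y 0, …, y (k - 1)`,
every new vector can be moved to `y k`, until the sequence is exhausted. -/
structure IsWittFrame (Q : QuadraticForm R M) (c : R) {n : ℕ} (y : Fin n → M) : Prop where
  exists_apply_eq (k : Fin n) (x : M) : Q x = c → (∀ j < k, polar Q (y j) x = 0) →
    x ∉ span R (y '' Set.Iio k) →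
    ∃ g ∈ rootReflectionMonoid Q, g x = y k ∧ ∀ j < k, g (y j) = y j
  mem_span (x : M) : Q x = c → (∀ j, polar Q (y j) x = 0) → x ∈ span R (Set.range y)

lemma isWittFrame_of_exists_intermediate {c : R} {n : ℕ} {y : Fin n → M}
    (hyc : ∀ k, Q (y k) = c) (hyy : ∀ i j, polar Q (y i) (y j) = 0)
    (hmove : ∀ k x, Q x = c → (∀ j < k, polar Q (y j) x = 0) → x ≠ 0 → (∀ j < k, x ≠ y j) →
      ∃ z, Q z = c ∧ (∀ j < k, polar Q (y j) z = 0) ∧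
        (x = z ∨ Q (x - z) = 1) ∧ (z = y k ∨ Q (z - y k) = 1))
    (hspan : ∀ x, Q x = c → (∀ j, polar Q (y j) x = 0) → ∃ a : Fin n → R, ∑ j, a j • y j = x) :
    IsWittFrame Q c y := by
  refine ⟨fun k x hxc hxy hx => ?_, fun x hxc hxy =>
    (mem_span_range_iff_exists_fun R).2 (hspan x hxc hxy)⟩
  obtain ⟨z, hzc, hzy, hxz, hzk⟩ := hmove k x hxc hxy (fun h => hx (h ▸ zero_mem _))
    fun j hj h => hx (subset_span ⟨j, hj, h.symm⟩)
  obtain ⟨g, hg, hgx, hgfix⟩ :=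
    exists_mem_rootReflectionMonoid_apply_eq (hxc.trans hzc.symm) hxz
  obtain ⟨h, hh, hhz, hhfix⟩ :=
    exists_mem_rootReflectionMonoid_apply_eq (hzc.trans (hyc k).symm) hzk
  refine ⟨h * g, mul_mem hh hg, by rw [Module.End.mul_apply, hgx, hhz], fun j hj => ?_⟩
  rw [Module.End.mul_apply, hgfix _ ((hxy j hj).trans (hzy j hj).symm),
    hhfix _ ((hzy j hj).trans (hyy j k).symm)]

/-- In the proof, `g` is chosen to bring the longest possible initial segment of `y` into `C`. -/
lemma IsWittFrame.exists_map_eq_span {c : R} {n : ℕ} {y : Fin n → M} (hy : IsWittFrame Q c y)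
    {C : Submodule R M} (hC : ∀ x ∈ C, ∀ z ∈ C, polar Q x z = 0)
    (hspan : C ≤ span R {x ∈ C | Q x = c}) :
    ∃ k ≤ n, ∃ g ∈ rootReflectionMonoid Q, C.map g = span R (y '' {j | (j : ℕ) < k}) := by
  let P : Set ℕ :=
    {k | k ≤ n ∧ ∃ g ∈ rootReflectionMonoid Q, ∀ j : Fin n, (j : ℕ) < k → y j ∈ C.map g}
  obtain ⟨k, ⟨hkn, g, hg, hyk⟩, hmax⟩ : ∃ k ∈ P, ∀ m ∈ P, m ≤ k :=
    Set.exists_max_image P id ((Set.finite_Iic n).subset fun _ h => h.1)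
      ⟨0, n.zero_le, 1, one_mem _, fun _ h => absurd h (Nat.not_lt_zero _)⟩
  refine ⟨k, hkn, g, hg, le_antisymm ?_ (span_le.2 (Set.image_subset_iff.2 hyk))⟩
  by_contra hle
  obtain ⟨x, ⟨hxC, hxc⟩, hx⟩ : ∃ x ∈ {x ∈ C | Q x = c}, g x ∉ span R (y '' {j | (j : ℕ) < k}) := by
    contrapose! hle
    exact map_le_iff_le_comap.2 (hspan.trans (span_le.2 hle))
  have hQ : Q (g x) = c := (map_of_mem_rootReflectionMonoid hg x).trans hxc
  have hortho (j : Fin n) (hj : (j : ℕ) < k) : polar Q (y j) (g x) = 0 := by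
    obtain ⟨z, hz, hzj⟩ := hyk j hj
    rw [← hzj, polar_of_mem_rootReflectionMonoid hg, hC z hz x hxC]
  obtain rfl | hkn := hkn.eq_or_lt
  · exact hx (by simpa using hy.mem_span _ hQ fun j => hortho j j.isLt)
  · obtain ⟨h, hh, hhx, hhy⟩ := hy.exists_apply_eq ⟨k, hkn⟩ (g x) hQ (fun j hj => hortho j hj) hx
    have hnext : k + 1 ∈ P := by
      refine ⟨hkn, h * g, mul_mem hh hg, fun j hj => ?_⟩
      rw [Module.End.mul_eq_comp, Submodule.map_comp]
      obtain hj | hj := (Nat.lt_succ_iff.1 hj).lt_or_eq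
      · exact ⟨y j, hyk j hj, hhy j hj⟩
      · obtain rfl : j = ⟨k, hkn⟩ := Fin.ext hj
        exact ⟨g x, mem_map_of_mem hxC, hhx⟩
    exact absurd (hmax _ hnext) k.lt_succ_self.not_ge

end RootReflections

section ModTwo

open QuadraticMap Submodule

variable {V : Type*} [AddCommGroup V] [Module (ZMod 2) V] {Q : QuadraticForm (ZMod 2) V}
  {C : Submodule (ZMod 2) V}

lemma le_span_of_exists_eq_one (hC : ∀ x ∈ C, ∀ y ∈ C, polar Q x y = 0)
    (hone : ∃ u ∈ C, Q u = 1) : C ≤ span (ZMod 2) {x ∈ C | Q x = 1} := by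
  obtain ⟨u, huC, hu⟩ := hone
  intro x hx
  have hzero_or_one : ∀ a : ZMod 2, a = 0 ∨ a = 1 := by decide
  obtain hQx | hQx := hzero_or_one (Q x)
  · have hxu : Q (x + u) = 1 := by
      rw [QuadraticMap.map_add Q, hQx, hu, hC x hx u huC, zero_add, add_zero]
    rw [← add_sub_cancel_right x u]
    exact sub_mem (subset_span ⟨add_mem hx huC, hxu⟩) (subset_span ⟨huC, hu⟩)
  · exact subset_span ⟨hx, hQx⟩

lemma le_span_eq_one_or_le_span_eq_zero (hC : ∀ x ∈ C, ∀ y ∈ C, polar Q x y = 0) :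
    C ≤ span (ZMod 2) {x ∈ C | Q x = 1} ∨ C ≤ span (ZMod 2) {x ∈ C | Q x = 0} := by
  by_cases hone : ∃ u ∈ C, Q u = 1
  · exact .inl (le_span_of_exists_eq_one hC hone)
  · have hne_one : ∀ a : ZMod 2, a ≠ 1 → a = 0 := by decide
    exact .inr fun x hx => subset_span ⟨hx, hne_one _ fun h => hone ⟨x, hx, h⟩⟩

end ModTwo

section ConstructionA

open Submodule

variable {ι F : Type*}

/-- Coordinatewise reduction modulo `2`. -/
def modTwo : (ι → ℤ) →ₗ[ℤ] (ι → ZMod 2) :=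
  (Int.castAddHom (ZMod 2)).toIntLinearMap.compLeft ι

lemma modTwo_surjective : Function.Surjective (modTwo (ι := ι)) := fun v =>
  (ZMod.intCast_surjective.comp_left (α := ι)) v

lemma mem_ker_modTwo {c : ι → ℤ} : c ∈ LinearMap.ker (modTwo (ι := ι)) ↔ ∃ d, c = (2 : ℤ) • d := by
  have hdvd : c ∈ LinearMap.ker modTwo ↔ ∀ i, (2 : ℤ) ∣ c i := by
    simp only [LinearMap.mem_ker, funext_iff]
    exact forall_congr' fun i => ZMod.intCast_zmod_eq_zero_iff_dvd (c i) 2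
  simp only [hdvd, dvd_def, funext_iff, Pi.smul_apply, smul_eq_mul, Classical.skolem]

variable [Fintype ι] [AddCommGroup F] [Module ℝ F]

/-- The linear map `c ↦ ½ ∑ i, c i • e i`. -/
def halfCombination (e : ι → F) : (ι → ℤ) →ₗ[ℤ] F :=
  (2⁻¹ : ℝ) • Fintype.linearCombination ℤ e

lemma halfCombination_apply (e : ι → F) (c : ι → ℤ) :
    halfCombination e c = (2⁻¹ : ℝ) • ∑ i, (c i : ℝ) • e i := by
  simp [halfCombination, Fintype.linearCombination_apply, Int.cast_smul_eq_zsmul]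

lemma halfCombination_single [DecidableEq ι] (e : ι → F) (i : ι) :
    halfCombination e (Pi.single i 1) = (2⁻¹ : ℝ) • e i := by
  simp [halfCombination]

lemma map_ker_modTwo (e : ι → F) :
    (LinearMap.ker modTwo).map (halfCombination e) = span ℤ (Set.range e) := by
  have htwo (d : ι → ℤ) :
      halfCombination e ((2 : ℤ) • d) = Fintype.linearCombination ℤ e d := by
    rw [map_smul, ← Int.cast_smul_eq_zsmul ℝ]
    simp [halfCombination]
  ext x
  simp only [← Fintype.range_linearCombination, mem_map, mem_ker_modTwo, LinearMap.mem_range]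
  constructor
  · rintro ⟨_, ⟨d, rfl⟩, rfl⟩
    exact ⟨d, (htwo d).symm⟩
  · rintro ⟨d, rfl⟩
    exact ⟨_, ⟨d, rfl⟩, htwo d⟩

/-- The lattice obtained by Construction A from the binary code `C`, in the basis `½ e`. -/
def constructionA (e : ι → F) (C : Submodule (ZMod 2) (ι → ZMod 2)) : Submodule ℤ F :=
  ((C.restrictScalars ℤ).comap modTwo).map (halfCombination e)

lemma constructionA_span (e : ι → F) (S : Set (ι → ℤ)) :
    constructionA e (span (ZMod 2) (modTwo '' S)) =
      span ℤ (Set.range e) ⊔ span ℤ (halfCombination e '' S) := by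
  rw [constructionA, restrictScalars_span ℤ (ZMod 2) ZMod.intCast_surjective, ← map_span,
    comap_map_eq, Submodule.map_sup, map_ker_modTwo, map_span, sup_comm]

lemma exists_eq_constructionA {e : ι → F} {L : Submodule ℤ F} (hΛ : span ℤ (Set.range e) ≤ L)
    (hL : L ≤ LinearMap.range (halfCombination e)) : ∃ C, L = constructionA e C := by
  let P : Submodule ℤ (ι → ℤ) := L.comap (halfCombination e)
  have hker : LinearMap.ker modTwo ≤ P := map_le_iff_le_comap.1 ((map_ker_modTwo e).trans_le hΛ)
  have hP : ((P.map modTwo).comap modTwo) = P := comap_map_eq_self hker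
  refine ⟨AddSubgroup.toZModSubmodule 2 (P.map modTwo).toAddSubgroup, ?_⟩
  calc L = P.map (halfCombination e) := (map_comap_eq_self hL).symm
    _ = ((P.map modTwo).comap modTwo).map (halfCombination e) := by rw [hP]

end ConstructionA

section E6

open QuadraticMap

variable (R : Type*) [CommRing R]

/-- The quadratic form of the `E₆` root lattice in a basis of simple roots, normalised so that roots
have value `1`; its polar form has matrix `G6`. -/
def e6Form : QuadraticForm R (Fin 6 → R) :=
  .ofPolar
    (fun x => ∑ i, x i ^ 2 - (x 0 * x 1 + x 1 * x 2 + x 2 * x 3 + x 3 * x 4 + x 2 * x 5))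
    (fun a x => by simp only [Fin.sum_univ_six, Pi.smul_apply, smul_eq_mul]; ring)
    (fun x z y => by simp only [polar, Fin.sum_univ_six, Pi.add_apply]; ring)
    (fun a x y => by
      simp only [polar, Fin.sum_univ_six, Pi.add_apply, Pi.smul_apply, smul_eq_mul]; ring)

lemma e6Form_apply (x : Fin 6 → R) : e6Form R x =
    ∑ i, x i ^ 2 - (x 0 * x 1 + x 1 * x 2 + x 2 * x 3 + x 3 * x 4 + x 2 * x 5) :=
  rfl

/-- Three mutually orthogonal simple roots. -/
def orthogonalRoots : Fin 3 → Fin 6 → R :=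
  ![Pi.single 0 1, Pi.single 2 1, Pi.single 4 1]

/-- Two sums of orthogonal simple roots; modulo `2` they span a maximal subspace on which
`e6Form` vanishes. -/
def singularPair : Fin 2 → Fin 6 → R :=
  ![Pi.single 0 1 + Pi.single 2 1, Pi.single 0 1 + Pi.single 4 1]

lemma isWittFrame_orthogonalRoots :
    IsWittFrame (e6Form (ZMod 2)) 1 (orthogonalRoots (ZMod 2)) :=
  isWittFrame_of_exists_intermediate (by decide +kernel) (by decide +kernel)
    (by decide +kernel) (by decide +kernel)

lemma isWittFrame_singularPair :
    IsWittFrame (e6Form (ZMod 2)) 0 (singularPair (ZMod 2)) :=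
  isWittFrame_of_exists_intermediate (by decide +kernel) (by decide +kernel)
    (by decide +kernel) (by decide +kernel)

/-- Searching up to the coefficients `1, 2, 3, 2, 1, 2` of the highest root suffices. -/
lemma exists_root_modTwo_eq {v : Fin 6 → ZMod 2} (hv : e6Form (ZMod 2) v = 1) :
    ∃ r, e6Form ℤ r = 1 ∧ modTwo r = v := by
  have hsearch : ∀ v : Fin 6 → ZMod 2, e6Form (ZMod 2) v = 1 →
      ∃ r : ∀ i, Fin (![2, 3, 4, 3, 2, 3] i),
        e6Form ℤ (fun i => (r i : ℕ)) = 1 ∧ modTwo (fun i => (r i : ℕ)) = v := by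
    decide +kernel
  obtain ⟨r, hr, hrv⟩ := hsearch v hv
  exact ⟨_, hr, hrv⟩

lemma e6Form_modTwo (x : Fin 6 → ℤ) : e6Form (ZMod 2) (modTwo x) = (e6Form ℤ x : ZMod 2) := by
  simp [e6Form_apply, modTwo]

lemma polar_e6Form_modTwo (x y : Fin 6 → ℤ) :
    polar (e6Form (ZMod 2)) (modTwo x) (modTwo y) = ((polar (e6Form ℤ) x y : ℤ) : ZMod 2) := by
  simp only [polar, ← map_add, e6Form_modTwo, Int.cast_sub]

end E6

section DualLattice

open Matrix Submodule

/-- The adjugate of `G6`; as `G6` has determinant `3`, the columns of `e6Adjugate / 3` give the dual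
basis of the simple roots of `E₆`. -/
def e6Adjugate : Matrix (Fin 6) (Fin 6) ℤ :=
  !![4, 5, 6, 4, 2, 3;
     5, 10, 12, 8, 4, 6;
     6, 12, 18, 12, 6, 9;
     4, 8, 12, 10, 5, 6;
     2, 4, 6, 5, 4, 3;
     3, 6, 9, 6, 3, 6]

lemma e6Adjugate_mul_G6 : e6Adjugate.map (Int.castRingHom ℝ) * G6 = (3 : ℝ) • 1 := by
  ext i j
  rw [Matrix.smul_apply, one_apply, smul_eq_mul, mul_ite, mul_one, mul_zero]
  fin_cases i <;> fin_cases j <;> simp [e6Adjugate, G6, mul_apply, Fin.sum_univ_six] <;> norm_num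

section MulVec

variable {ι R S : Type*} [Fintype ι]

lemma comp_mulVec [NonAssocSemiring R] [NonAssocSemiring S] (φ : R →+* S) (A : Matrix ι ι R)
    (k : ι → R) : φ ∘ (A *ᵥ k) = A.map φ *ᵥ (φ ∘ k) :=
  funext (RingHom.map_mulVec φ A k)

lemma map_dotProduct_mulVec [NonAssocSemiring R] [NonAssocSemiring S] (φ : R →+* S)
    (A : Matrix ι ι R) (k : ι → R) : φ (k ⬝ᵥ A *ᵥ k) = (φ ∘ k) ⬝ᵥ A.map φ *ᵥ (φ ∘ k) := by
  rw [RingHom.map_dotProduct, comp_mulVec]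

lemma vecMulVec_self_mulVec_eq_zero [CommSemiring R] [NoZeroDivisors R] {v k : ι → R}
    (hk : k ⬝ᵥ vecMulVec v v *ᵥ k = 0) : vecMulVec v v *ᵥ k = 0 := by
  have hsq : v ⬝ᵥ k * v ⬝ᵥ k = 0 := by
    simpa [vecMulVec_mulVec, dotProduct_comm k v] using hk
  simp [vecMulVec_mulVec, mul_self_eq_zero.1 hsq]

end MulVec

/-- The discriminant group of `E₆` has order `3` and no isotropic element but `0`: modulo `3`, the
matrix `e6Adjugate` is the square of a single linear form. -/
lemma exists_e6Adjugate_mulVec_eq {k : Fin 6 → ℤ} (hk : 3 ∣ k ⬝ᵥ e6Adjugate *ᵥ k) :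
    ∃ c, e6Adjugate *ᵥ k = (3 : ℤ) • c := by
  let φ := Int.castRingHom (ZMod 3)
  let v : Fin 6 → ZMod 3 := ![1, 2, 0, 1, 2, 0]
  have hv : e6Adjugate.map φ = vecMulVec v v := by decide
  have hsquare : (φ ∘ k) ⬝ᵥ vecMulVec v v *ᵥ (φ ∘ k) = 0 := by
    rw [← hv, ← map_dotProduct_mulVec]
    exact (ZMod.intCast_zmod_eq_zero_iff_dvd _ 3).2 hk
  have hzero : φ ∘ (e6Adjugate *ᵥ k) = 0 := by
    rw [comp_mulVec, hv, vecMulVec_self_mulVec_eq_zero hsquare]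
  choose c hc using fun i => (ZMod.intCast_zmod_eq_zero_iff_dvd _ 3).1 (congrFun hzero i)
  exact ⟨c, funext hc⟩

lemma exists_halfCombination_eq {F : Type*} [NormedAddCommGroup F] [InnerProductSpace ℝ F]
    {e : Fin 6 → F} (hGram : ∀ i j, ⟪e i, e j⟫ = 2 * G6 i j) {y : Fin 6 → ℝ}
    {k : Fin 6 → ℤ} {m : ℤ} (hk : ∀ i, ⟪e i, ∑ j, y j • e j⟫ = k i)
    (hm : ⟪∑ j, y j • e j, ∑ j, y j • e j⟫ = m) : ∃ c, halfCombination e c = ∑ j, y j • e j := by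
  let φ := Int.castRingHom ℝ
  have hGy : φ ∘ k = (2 : ℝ) • G6 *ᵥ y := by
    ext i
    rw [Function.comp_apply, eq_intCast, ← hk]
    simp only [inner_sum, real_inner_smul_right, hGram, Pi.smul_apply, mulVec, dotProduct,
      smul_eq_mul, Finset.mul_sum]
    exact Finset.sum_congr rfl fun j _ => by ring
  have hadj : e6Adjugate.map φ *ᵥ (φ ∘ k) = (6 : ℝ) • y := by
    rw [hGy, mulVec_smul, mulVec_mulVec, e6Adjugate_mul_G6, smul_mulVec, one_mulVec, smul_smul]
    norm_num
  have hky : (φ ∘ k) ⬝ᵥ y = m := by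
    rw [← hm, sum_inner, dotProduct_comm]
    simp [real_inner_smul_left, hk, dotProduct, φ]
  have hkk : φ (k ⬝ᵥ e6Adjugate *ᵥ k) = φ (6 * m) := by
    rw [map_dotProduct_mulVec, hadj, dotProduct_smul, hky]
    simp [φ]
  obtain ⟨c, hc⟩ := exists_e6Adjugate_mulVec_eq
    (Dvd.dvd.trans (by norm_num : (3 : ℤ) ∣ 6) ⟨m, Int.cast_injective hkk⟩)
  have hyc (i) : 6 * y i = 3 * c i := by
    have := congrFun hadj i
    rw [← comp_mulVec, hc] at this
    simpa [φ] using this.symm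
  refine ⟨c, ?_⟩
  rw [halfCombination_apply, Finset.smul_sum]
  refine Finset.sum_congr rfl fun i _ => ?_
  rw [smul_smul, show y i = 2⁻¹ * c i by linarith [hyc i]]

lemma le_range_halfCombination {e : Fin 6 → E 6} (he : LinearIndependent ℝ e)
    (hGram : ∀ i j, ⟪e i, e j⟫ = 2 * G6 i j) {L : Submodule ℤ (E 6)} (hL : LatticeIsIntegral L)
    (hΛ : span ℤ (Set.range e) ≤ L) : L ≤ LinearMap.range (halfCombination e) := by
  intro x hx
  obtain ⟨y, rfl⟩ : ∃ y : Fin 6 → ℝ, ∑ i, y i • e i = x := by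
    rw [← mem_span_range_iff_exists_fun ℝ, he.span_eq_top_of_card_eq_finrank' (by simp)]
    exact mem_top
  choose k hk using fun i => hL (e i) (hΛ (subset_span ⟨i, rfl⟩)) _ hx
  obtain ⟨m, hm⟩ := hL _ hx _ hx
  exact exists_halfCombination_eq hGram hk hm

end DualLattice

section SegmentLattice

open Submodule

variable {ι F : Type*} [AddCommGroup F] {n : ℕ}

/-- The lattice generated by the `e i` and by the `v j` with `j < k`. -/
def segmentLattice (e : ι → F) (v : Fin n → F) (k : ℕ) : Submodule ℤ F :=
  span ℤ (Set.range e) ⊔ span ℤ (v '' {j | (j : ℕ) < k})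

lemma segmentLattice_zero (e : ι → F) (v : Fin n → F) :
    segmentLattice e v 0 = span ℤ (Set.range e) := by
  simp [segmentLattice]

lemma segmentLattice_one (e : ι → F) (v : Fin (n + 1) → F) :
    segmentLattice e v 1 = span ℤ (Set.range e) ⊔ span ℤ {v 0} := by
  simp [segmentLattice]

lemma segmentLattice_two (e : ι → F) (v : Fin (n + 2) → F) :
    segmentLattice e v 2 = span ℤ (Set.range e) ⊔ span ℤ {v 0, v 1} := by
  have hindices : {j : Fin (n + 2) | (j : ℕ) < 2} = {0, 1} := by
    ext j
    simp only [Set.mem_ofPred_eq, Set.mem_insert_iff, Set.mem_singleton_iff, Fin.ext_iff,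
      Fin.val_zero, Fin.val_one]
    omega
  rw [segmentLattice, hindices, Set.image_pair]

lemma segmentLattice_three (e : ι → F) (v : Fin (n + 3) → F) :
    segmentLattice e v 3 = span ℤ (Set.range e) ⊔ span ℤ {v 0, v 1, v 2} := by
  have hindices : {j : Fin (n + 3) | (j : ℕ) < 3} = {0, 1, 2} := by
    ext j
    simp only [Set.mem_ofPred_eq, Set.mem_insert_iff, Set.mem_singleton_iff, Fin.ext_iff,
      Fin.val_zero, Fin.val_one, Fin.val_two]
    omega
  rw [segmentLattice, hindices, Set.image_insert_eq, Set.image_pair]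

end SegmentLattice

section HalfGram

open QuadraticMap Submodule

variable {F : Type*} [NormedAddCommGroup F] [InnerProductSpace ℝ F] {e : Fin 6 → F}

lemma reflection_orthogonal_singleton_apply {v : F} (hv : ⟪v, v⟫ = 1) (x : F) :
    (ℝ ∙ v)ᗮ.reflection x = x - (2 * ⟪v, x⟫) • v := by
  have hreflection : (ℝ ∙ v).reflection x = 2 • (⟪v, x⟫ / ‖v‖ ^ 2) • v - x := by
    simpa using reflection_singleton_apply (𝕜 := ℝ) v x
  rw [reflection_orthogonal_apply, hreflection, ← real_inner_self_eq_norm_sq, hv, div_one,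
    two_nsmul, two_mul, add_smul, neg_sub]

lemma inner_halfCombination (hGram : ∀ i j, ⟪e i, e j⟫ = 2 * G6 i j) (c d : Fin 6 → ℤ) :
    ⟪halfCombination e c, halfCombination e d⟫ = ((polar (e6Form ℤ) c d : ℤ) : ℝ) / 2 := by
  simp only [halfCombination_apply, real_inner_smul_left, real_inner_smul_right, sum_inner,
    inner_sum, hGram, polar, e6Form_apply]
  simp [Fin.sum_univ_six, G6]
  ring

end HalfGram

section IntegralLattices

open QuadraticMap Submodule

variable {n : ℕ}

lemma IsometricLattices.refl (L : Submodule ℤ (E n)) : IsometricLattices L L :=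
  ⟨.refl ℝ _, by simp⟩

lemma IsometricLattices.trans {L M N : Submodule ℤ (E n)} (hLM : IsometricLattices L M)
    (hMN : IsometricLattices M N) : IsometricLattices L N := by
  obtain ⟨g, hg⟩ := hLM
  obtain ⟨h, hh⟩ := hMN
  refine ⟨g.trans h, ?_⟩
  rw [LinearIsometryEquiv.coe_trans, Set.image_comp, hg, hh]

variable {e : Fin 6 → E n}

lemma isometricLattices_constructionA_map_rootReflection
    (hGram : ∀ i j, ⟪e i, e j⟫ = 2 * G6 i j) {v : Fin 6 → ZMod 2} (hv : e6Form (ZMod 2) v = 1)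
    (C : Submodule (ZMod 2) (Fin 6 → ZMod 2)) :
    IsometricLattices (constructionA e C)
      (constructionA e (C.map (rootReflection (e6Form (ZMod 2)) v))) := by
  obtain ⟨r, hr, rfl⟩ := exists_root_modTwo_eq hv
  have hmod (c) : modTwo (rootReflection (e6Form ℤ) r c) =
      rootReflection (e6Form (ZMod 2)) (modTwo r) (modTwo c) := by
    rw [rootReflection_apply, rootReflection_apply, map_sub, map_smul, polar_e6Form_modTwo,
      Int.cast_smul_eq_zsmul (ZMod 2)]
  have hnorm : ⟪halfCombination e r, halfCombination e r⟫ = 1 := by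
    rw [inner_halfCombination hGram, polar_self, hr]
    norm_num
  let g := (ℝ ∙ halfCombination e r)ᗮ.reflection
  have hg (c) : g (halfCombination e c) = halfCombination e (rootReflection (e6Form ℤ) r c) := by
    rw [reflection_orthogonal_singleton_apply hnorm, inner_halfCombination hGram,
      mul_div_cancel₀ _ two_ne_zero, Int.cast_smul_eq_zsmul, rootReflection_apply, map_sub,
      map_smul]
  refine ⟨g, Set.Subset.antisymm ?_ ?_⟩
  · rintro _ ⟨_, ⟨c, hc, rfl⟩, rfl⟩
    refine ⟨rootReflection (e6Form ℤ) r c, ?_, (hg c).symm⟩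
    change modTwo _ ∈ C.map _
    rw [hmod]
    exact mem_map_of_mem hc
  · rintro _ ⟨c, ⟨d, hd, hdc⟩, rfl⟩
    refine ⟨_, ⟨rootReflection (e6Form ℤ) r c, ?_, rfl⟩, ?_⟩
    · change modTwo _ ∈ C
      rwa [hmod, ← hdc, involutive_rootReflection hv]
    · rw [hg, involutive_rootReflection hr]

lemma isometricLattices_constructionA_map (hGram : ∀ i j, ⟪e i, e j⟫ = 2 * G6 i j)
    {g : Module.End (ZMod 2) (Fin 6 → ZMod 2)} (hg : g ∈ rootReflectionMonoid (e6Form (ZMod 2)))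
    (C : Submodule (ZMod 2) (Fin 6 → ZMod 2)) :
    IsometricLattices (constructionA e C) (constructionA e (C.map g)) := by
  induction hg using Submonoid.closure_induction generalizing C with
  | mem g hg =>
    obtain ⟨v, hv, rfl⟩ := hg
    exact isometricLattices_constructionA_map_rootReflection hGram hv C
  | one => rw [Module.End.one_eq_id, Submodule.map_id]; exact .refl _
  | mul g h _ _ ihg ihh =>
    rw [Module.End.mul_eq_comp, Submodule.map_comp]
    exact (ihh C).trans (ihg _)

lemma polar_eq_zero_of_latticeIsIntegral (hGram : ∀ i j, ⟪e i, e j⟫ = 2 * G6 i j)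
    {C : Submodule (ZMod 2) (Fin 6 → ZMod 2)} (hC : LatticeIsIntegral (constructionA e C)) :
    ∀ x ∈ C, ∀ y ∈ C, polar (e6Form (ZMod 2)) x y = 0 := by
  intro x hx y hy
  obtain ⟨c, rfl⟩ := modTwo_surjective x
  obtain ⟨d, rfl⟩ := modTwo_surjective y
  obtain ⟨k, hk⟩ := hC _ ⟨c, hx, rfl⟩ _ ⟨d, hy, rfl⟩
  rw [inner_halfCombination hGram, div_eq_iff two_ne_zero] at hk
  rw [polar_e6Form_modTwo, ZMod.intCast_zmod_eq_zero_iff_dvd]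
  exact ⟨k, by rw [mul_comm]; exact_mod_cast hk⟩

lemma exists_isometricLattices_of_isWittFrame (hGram : ∀ i j, ⟪e i, e j⟫ = 2 * G6 i j)
    {C : Submodule (ZMod 2) (Fin 6 → ZMod 2)}
    (hC : ∀ x ∈ C, ∀ y ∈ C, polar (e6Form (ZMod 2)) x y = 0)
    {a : ZMod 2} {m : ℕ} {y : Fin m → Fin 6 → ℤ}
    (hy : IsWittFrame (e6Form (ZMod 2)) a (modTwo ∘ y))
    (hspan : C ≤ span (ZMod 2) {x ∈ C | e6Form (ZMod 2) x = a}) :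
    ∃ k ≤ m, IsometricLattices (constructionA e C)
      (segmentLattice e (halfCombination e ∘ y) k) := by
  obtain ⟨k, hk, g, hg, hCg⟩ := hy.exists_map_eq_span hC hspan
  refine ⟨k, hk, ?_⟩
  have := isometricLattices_constructionA_map hGram hg C
  rwa [hCg, Set.image_comp, constructionA_span, ← Set.image_comp] at this

end IntegralLattices

section Classification

open Submodule

lemma modTwo_comp_orthogonalRoots : modTwo ∘ orthogonalRoots ℤ = orthogonalRoots (ZMod 2) := by
  decide

lemma modTwo_comp_singularPair : modTwo ∘ singularPair ℤ = singularPair (ZMod 2) := by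
  decide

lemma halfCombination_comp_orthogonalRoots {F : Type*} [AddCommGroup F] [Module ℝ F]
    (e : Fin 6 → F) : halfCombination e ∘ orthogonalRoots ℤ =
      ![(2 : ℝ)⁻¹ • e 0, (2 : ℝ)⁻¹ • e 2, (2 : ℝ)⁻¹ • e 4] := by
  funext j
  fin_cases j <;> exact halfCombination_single e _

lemma halfCombination_comp_singularPair {F : Type*} [AddCommGroup F] [Module ℝ F]
    (e : Fin 6 → F) : halfCombination e ∘ singularPair ℤ =
      ![(2 : ℝ)⁻¹ • (e 0 + e 2), (2 : ℝ)⁻¹ • (e 0 + e 4)] := by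
  funext j
  fin_cases j <;> simp [singularPair, halfCombination_single]

lemma exists_isometricLattices_segmentLattice {e : Fin 6 → E 6} (he : LinearIndependent ℝ e)
    (hGram : ∀ i j, ⟪e i, e j⟫ = 2 * G6 i j) {L : Submodule ℤ (E 6)} (hL : LatticeIsIntegral L)
    (hΛ : span ℤ (Set.range e) ≤ L) :
    (∃ k ≤ 3, IsometricLattices L
      (segmentLattice e ![(2 : ℝ)⁻¹ • e 0, (2 : ℝ)⁻¹ • e 2, (2 : ℝ)⁻¹ • e 4] k)) ∨
    ∃ k ≤ 2, IsometricLattices L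
      (segmentLattice e ![(2 : ℝ)⁻¹ • (e 0 + e 2), (2 : ℝ)⁻¹ • (e 0 + e 4)] k) := by
  obtain ⟨C, rfl⟩ := exists_eq_constructionA hΛ (le_range_halfCombination he hGram hL hΛ)
  have hC := polar_eq_zero_of_latticeIsIntegral hGram hL
  rw [← halfCombination_comp_orthogonalRoots, ← halfCombination_comp_singularPair]
  obtain hspan | hspan := le_span_eq_one_or_le_span_eq_zero hC
  · exact .inl (exists_isometricLattices_of_isWittFrame hGram hC
      (modTwo_comp_orthogonalRoots ▸ isWittFrame_orthogonalRoots) hspan)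
  · exact .inr (exists_isometricLattices_of_isWittFrame hGram hC
      (modTwo_comp_singularPair ▸ isWittFrame_singularPair) hspan)

end Classification

/-- If `e1, …, e6` are linearly independent with Gram matrix `2·G6`, and `Λ₆` is their
ℤ-span (the laminated lattice `≅ √2·E₆`), then every integral lattice in `ℝ⁶`
containing `Λ₆` is isometric to one of six lattices. -/
theorem integral_lattices_containing_Λ6 (e : Fin 6 → E 6)
    (he : LinearIndependent ℝ e)
    (hGram : ∀ i j, ⟪e i, e j⟫ = 2 * G6 i j)
    (L : Submodule ℤ (E 6)) (hL : LatticeIsIntegral L)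
    (hΛ : Submodule.span ℤ (Set.range e) ≤ L) :
    IsometricLattices L (Submodule.span ℤ (Set.range e)) ∨
    IsometricLattices L (Submodule.span ℤ (Set.range e) ⊔
      Submodule.span ℤ {(2 : ℝ)⁻¹ • e 0}) ∨
    IsometricLattices L (Submodule.span ℤ (Set.range e) ⊔
      Submodule.span ℤ {(2 : ℝ)⁻¹ • (e 0 + e 2)}) ∨
    IsometricLattices L (Submodule.span ℤ (Set.range e) ⊔
      Submodule.span ℤ {(2 : ℝ)⁻¹ • e 0, (2 : ℝ)⁻¹ • e 2}) ∨
    IsometricLattices L (Submodule.span ℤ (Set.range e) ⊔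
      Submodule.span ℤ {(2 : ℝ)⁻¹ • (e 0 + e 2), (2 : ℝ)⁻¹ • (e 0 + e 4)}) ∨
    IsometricLattices L (Submodule.span ℤ (Set.range e) ⊔
      Submodule.span ℤ {(2 : ℝ)⁻¹ • e 0, (2 : ℝ)⁻¹ • e 2, (2 : ℝ)⁻¹ • e 4}) := by
  obtain ⟨k, hk, hLk⟩ | ⟨k, hk, hLk⟩ := exists_isometricLattices_segmentLattice he hGram hL hΛ
  · interval_cases k
    · exact .inl (by rwa [segmentLattice_zero] at hLk)
    · exact .inr (.inl (by rwa [segmentLattice_one] at hLk))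
    · exact .inr (.inr (.inr (.inl (by rwa [segmentLattice_two] at hLk))))
    · exact .inr (.inr (.inr (.inr (.inr (by rwa [segmentLattice_three] at hLk)))))
  · interval_cases k
    · exact .inl (by rwa [segmentLattice_zero] at hLk)
    · exact .inr (.inr (.inl (by rwa [segmentLattice_one] at hLk)))
    · exact .inr (.inr (.inr (.inr (.inl (by rwa [segmentLattice_two] at hLk)))))
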